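/- arXiv:1008.0763 — 2 statements merged into one kernel-verified Lean document; each statement's English description precedes it below -/
import Mathlib

section
/- Let G be a finite abelian group and H a subgroup of G. Then Ol(G) ≥ Ol(G/H) + Ol(H) − 1. -/
open Multiset

/-- A sequence (finite multiset) over `G` is zero-sumfree if every nonempty
subsequence has nonzero sum. -/
def IsZeroSumfree {G : Type*} [AddCommMonoid G] (S : Multiset G) : Prop :=
  ∀ T ≤ S, T ≠ 0 → T.sum ≠ 0

/-- A minimal zero-sum sequence: a nonempty sequence with sum zero all of whose
nonempty proper subsequences have nonzero sum. -/
def IsMinimalZeroSum {G : Type*} [AddCommMonoid G] (S : Multiset G) : Prop :=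
  S ≠ 0 ∧ S.sum = 0 ∧ ∀ T ≤ S, T ≠ 0 → T ≠ S → T.sum ≠ 0

/-- The cumulated multiplicity of level `ℓ` of a sequence:
`cm_ℓ(S) = Σ_{g ∈ G} max {0, v_g(S) − ℓ}`. -/
noncomputable def cmul {G : Type*} [AddCommMonoid G] (ℓ : ℕ) (S : Multiset G) : ℕ :=
  letI := Classical.decEq G
  ∑ g ∈ S.toFinset, (S.count g - ℓ)

/-- `SD_{(k,ℓ)}(G)`: the maximum length of a minimal zero-sum sequence `S` over `G`
with `cm_ℓ(S) ≤ k`. -/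
noncomputable def SDpair (G : Type*) [AddCommMonoid G] (k ℓ : ℕ) : ℕ :=
  sSup {m | ∃ S : Multiset G, IsMinimalZeroSum S ∧ cmul ℓ S ≤ k ∧ Multiset.card S = m}

/-- `SD_k(G)`: the `k`-th Strong Davenport constant. -/
noncomputable def SDk (G : Type*) [AddCommMonoid G] (k : ℕ) : ℕ := SDpair G k 1

/-- The Strong Davenport constant `SD(G) = SD_0(G)`. -/
noncomputable def SD (G : Type*) [AddCommMonoid G] : ℕ := SDk G 0

/-- The Olson constant `Ol(G) = SD_1(G)`. -/
noncomputable def Ol (G : Type*) [AddCommMonoid G] : ℕ := SDk G 1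

/-- `ol_k(G)`: the maximum length of a zero-sumfree sequence `S` over `G` with
`cm(S) ≤ k`. -/
noncomputable def olk (G : Type*) [AddCommMonoid G] (k : ℕ) : ℕ :=
  sSup {m | ∃ S : Multiset G, IsZeroSumfree S ∧ cmul 1 S ≤ k ∧ Multiset.card S = m}

/-- `Ol_k(G)`: the smallest integer `ℓ` such that every sequence `S` over `G` with
`cm(S) ≤ k` and `|S| ≥ ℓ` has a nonempty zero-sum subsequence. -/
noncomputable def Olk (G : Type*) [AddCommMonoid G] (k : ℕ) : ℕ :=
  sInf {m | ∀ S : Multiset G, cmul 1 S ≤ k → m ≤ Multiset.card S →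
    ∃ T, T ≤ S ∧ T ≠ 0 ∧ T.sum = 0}

/-- The Davenport constant `D(G)`: the maximum length of a minimal zero-sum
sequence over `G`. -/
noncomputable def DavenportD (G : Type*) [AddCommMonoid G] : ℕ :=
  sSup {m | ∃ S : Multiset G, IsMinimalZeroSum S ∧ Multiset.card S = m}

theorem cmul_one_add {G : Type*} [AddCommMonoid G] [DecidableEq G] (S : Multiset G) :
    cmul 1 S + card S.dedup = card S := by
  have h0 : cmul 1 S = ∑ g ∈ S.toFinset, (S.count g - 1) := by
    unfold cmul
    congr!
  have h1 : card S.dedup = ∑ g ∈ S.toFinset, 1 := by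
    rw [Finset.sum_const, smul_eq_mul, mul_one]
    rfl
  rw [h0, h1, ← Finset.sum_add_distrib, ← Multiset.toFinset_sum_count_eq S]
  refine Finset.sum_congr rfl fun g hg => ?_
  have := Multiset.one_le_count_iff_mem.2 (Multiset.mem_toFinset.1 hg)
  omega

theorem exists_sumfree_of_minimal {G : Type*} [AddCommMonoid G] {S : Multiset G}
    (hS : IsMinimalZeroSum S) (hc : cmul 1 S ≤ 1) :
    ∃ T : Multiset G, T.Nodup ∧ IsZeroSumfree T ∧ card S ≤ card T + 1 := by
  classical
  have key : ∀ T, T < S → IsZeroSumfree T := fun T hT U hU hU0 =>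
    hS.2.2 U (hU.trans hT.le) hU0 (hU.trans_lt hT).ne
  have h := cmul_one_add S
  by_cases hn : S.Nodup
  · obtain ⟨a, ha⟩ := Multiset.exists_mem_of_ne_zero hS.1
    refine ⟨S.erase a, hn.erase a, key _ (Multiset.erase_lt.2 ha), ?_⟩
    rw [Multiset.card_erase_add_one ha]
  · refine ⟨S.dedup, S.nodup_dedup, key _ (lt_of_le_of_ne (Multiset.dedup_le S) ?_), by omega⟩
    intro h'
    exact hn (Multiset.dedup_eq_self.1 h')

theorem minimal_of_sumfree {G : Type*} [AddCommGroup G] {T : Multiset G}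
    (hT : IsZeroSumfree T) (hn : T.Nodup) :
    IsMinimalZeroSum ((-T.sum) ::ₘ T) ∧ cmul 1 ((-T.sum) ::ₘ T) ≤ 1 := by
  classical
  refine ⟨⟨Multiset.cons_ne_zero, by simp, ?_⟩, ?_⟩
  · intro U hU hU0 hUS hs
    by_cases ha : -T.sum ∈ U
    · obtain ⟨U', rfl⟩ := Multiset.exists_cons_of_mem ha
      rw [Multiset.cons_le_cons_iff] at hU
      obtain ⟨V, hV⟩ := Multiset.le_iff_exists_add.1 hU
      have hVT : V ≤ T := hV ▸ Multiset.le_add_left V U'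
      have hV0 : V ≠ 0 := by
        rintro rfl
        apply hUS
        rw [add_zero] at hV
        rw [hV]
      apply hT V hVT hV0
      have e : T.sum = U'.sum + V.sum := by rw [← Multiset.sum_add, ← hV]
      rw [Multiset.sum_cons, e] at hs
      have : -V.sum = 0 := by rw [← hs]; abel
      simpa using this
    · exact hT U ((Multiset.le_cons_of_notMem ha).1 hU) hU0 hs
  · have h := cmul_one_add ((-T.sum) ::ₘ T)
    have h2 : T ≤ ((-T.sum) ::ₘ T).dedup :=
      Multiset.le_dedup.2 ⟨Multiset.le_cons_self _ _, hn⟩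
    have h3 := Multiset.card_le_card h2
    rw [Multiset.card_cons] at h
    omega

theorem le_Ol {G : Type*} [AddCommGroup G] [Finite G] {T : Multiset G}
    (hT : IsZeroSumfree T) (hn : T.Nodup) : card T + 1 ≤ Ol G := by
  classical
  have := Fintype.ofFinite G
  unfold Ol SDk SDpair
  refine le_csSup ⟨Fintype.card G + 1, ?_⟩ ⟨_, (minimal_of_sumfree hT hn).1,
    (minimal_of_sumfree hT hn).2, Multiset.card_cons _ _⟩
  rintro m ⟨S, hS, hc, rfl⟩
  obtain ⟨U, hU, -, h⟩ := exists_sumfree_of_minimal hS hc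
  have : card U ≤ Fintype.card G := Finset.card_le_univ (⟨U, hU⟩ : Finset G)
  omega

theorem exists_Ol (G : Type*) [AddCommGroup G] [Finite G] :
    ∃ T : Multiset G, T.Nodup ∧ IsZeroSumfree T ∧ Ol G ≤ card T + 1 := by
  by_cases h0 : Ol G = 0
  · refine ⟨0, Multiset.nodup_zero, fun U hU h => absurd (Multiset.le_zero.1 hU) h, by omega⟩
  have hne : {m | ∃ S : Multiset G, IsMinimalZeroSum S ∧ cmul 1 S ≤ 1 ∧
      Multiset.card S = m}.Nonempty := by
    by_contra h
    rw [Set.not_nonempty_iff_eq_empty] at h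
    apply h0
    unfold Ol SDk SDpair
    rw [h]
    simp
  have hb : BddAbove {m | ∃ S : Multiset G, IsMinimalZeroSum S ∧ cmul 1 S ≤ 1 ∧
      Multiset.card S = m} := by
    by_contra h
    apply h0
    unfold Ol SDk SDpair
    exact Nat.sSup_of_not_bddAbove h
  obtain ⟨S, hS, hc, hm⟩ := Nat.sSup_mem hne hb
  obtain ⟨T, h1, h2, h3⟩ := exists_sumfree_of_minimal hS hc
  refine ⟨T, h1, h2, ?_⟩
  rw [hm] at h3
  exact h3

/-- For a finite abelian group `G` and a subgroup `H`:
`Ol(G) ≥ Ol(G/H) + Ol(H) − 1`. -/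
theorem olson_ge_quotient_add_subgroup (G : Type*) [AddCommGroup G] [Fintype G]
    (H : AddSubgroup G) :
    Ol (G ⧸ H) + Ol H ≤ Ol G + 1 := by
  classical
  obtain ⟨A, hAn, hA, hAc⟩ := exists_Ol (G ⧸ H)
  obtain ⟨B, hBn, hB, hBc⟩ := exists_Ol H
  set X : Multiset G := A.map Quotient.out with hX
  set Y : Multiset G := B.map Subtype.val with hY
  have hXm : X.map (QuotientAddGroup.mk' H) = A := by
    rw [hX, Multiset.map_map]
    conv_rhs => rw [← Multiset.map_id A]
    refine Multiset.map_congr rfl fun a _ => ?_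
    exact Quotient.out_eq' a
  have hYm : ∀ y ∈ Y, y ∈ H := by
    intro y hy
    obtain ⟨b, -, rfl⟩ := Multiset.mem_map.1 hy
    exact b.2
  have hXn : X.Nodup := hAn.map Quotient.out_injective
  have hYn : Y.Nodup := hBn.map Subtype.val_injective
  have hdis : Disjoint X Y := by
    rw [Multiset.disjoint_left]
    intro x hx hy
    have h1 : QuotientAddGroup.mk' H x ∈ A := by
      rw [← hXm]
      exact Multiset.mem_map_of_mem _ hx
    have h2 : QuotientAddGroup.mk' H x = 0 := (QuotientAddGroup.eq_zero_iff x).2 (hYm x hy)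
    rw [h2] at h1
    exact hA {0} (Multiset.singleton_le.2 h1) (Multiset.singleton_ne_zero 0) (by simp)
  have hn : (X + Y).Nodup := Multiset.nodup_add.2 ⟨hXn, hYn, hdis⟩
  have hsf : IsZeroSumfree (X + Y) := by
    intro U hU hU0 hs
    have e : U ∩ X + (U - X) = U := by
      ext g
      simp only [Multiset.count_add, Multiset.count_inter, Multiset.count_sub]
      omega
    have hUY : U - X ≤ Y := by
      rw [tsub_le_iff_left]
      exact hU
    have hz : (U - X).sum ∈ H :=
      AddSubgroup.multiset_sum_mem H _ fun y hy => hYm y (Multiset.mem_of_le hUY hy)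
    have hUX : U ∩ X = 0 := by
      by_contra hne
      refine hA ((U ∩ X).map (QuotientAddGroup.mk' H)) ?_ ?_ ?_
      · rw [← hXm]
        exact Multiset.map_le_map Multiset.inter_le_right
      · simpa using hne
      · rw [← map_multiset_sum]
        refine (QuotientAddGroup.eq_zero_iff _).2 ?_
        have : (U ∩ X).sum = -(U - X).sum := by
          rw [eq_neg_iff_add_eq_zero, ← Multiset.sum_add, e, hs]
        rw [this]
        exact H.neg_mem hz
    rw [hUX, zero_add] at e
    rw [e] at hUY
    obtain ⟨V, hV⟩ : ∃ V : Multiset H, V.map Subtype.val = U := by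
      refine ⟨U.attach.map fun x => ⟨x.1, hYm _ (Multiset.mem_of_le hUY x.2)⟩, ?_⟩
      rw [Multiset.map_map]
      exact Multiset.attach_map_val U
    rw [← hV, hY, Multiset.map_le_map_iff Subtype.val_injective] at hUY
    refine hB V hUY ?_ ?_
    · rintro rfl
      exact hU0 (by simpa using hV.symm)
    · apply Subtype.val_injective
      have := map_multiset_sum H.subtype V
      change H.subtype V.sum = 0
      rw [this, ← hs, ← hV]
      rfl
  have h := le_Ol hsf hn
  have hc : card (X + Y) = card A + card B := by simp [hX, hY]
  omega
end

section
/- Let G be a finite abelian group and H a subgroup of G. Then SD(G) ≥ SD(G/H) + Ol(H) − 2, and consequently SD(G) ≥ SD(G/H) + SD(H) − 2. -/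
open Multiset

theorem mzs_dichotomy {G : Type*} [AddCommMonoid G] {S : Multiset G}
    (hS : IsMinimalZeroSum S) {T : Multiset G} (hT : T ≤ S) (h0 : T.sum = 0) :
    T = 0 ∨ T = S := by
  by_contra hcon
  rw [not_or] at hcon
  exact hS.2.2 T hT hcon.1 hcon.2 h0

theorem mzs_of_dichotomy {G : Type*} [AddCommMonoid G] {S : Multiset G}
    (hne : S ≠ 0) (h0 : S.sum = 0)
    (h : ∀ T ≤ S, T.sum = 0 → T = 0 ∨ T = S) : IsMinimalZeroSum S :=
  ⟨hne, h0, fun T hT h1 h2 h3 => (h T hT h3).elim h1 h2⟩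

theorem mzs_singleton_zero (G : Type*) [AddCommMonoid G] :
    IsMinimalZeroSum ({0} : Multiset G) := by
  refine mzs_of_dichotomy (by simp) (by simp) fun T hT _ => ?_
  exact Multiset.le_singleton.mp hT |> fun h => h

theorem mzs_zero_notMem {G : Type*} [AddCommMonoid G] {S : Multiset G}
    (hS : IsMinimalZeroSum S) (hc : 2 ≤ Multiset.card S) : (0 : G) ∉ S := by
  intro h
  rcases mzs_dichotomy hS (Multiset.singleton_le.mpr h) (by simp) with h1 | h1
  · simp at h1
  · rw [← h1] at hc
    simp at hc

theorem mzs_merge {G : Type*} [AddCommMonoid G] {a b : G} {R : Multiset G}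
    (hS : IsMinimalZeroSum (a ::ₘ b ::ₘ R)) : IsMinimalZeroSum ((a + b) ::ₘ R) := by
  have hsum := hS.2.1
  simp only [Multiset.sum_cons] at hsum
  refine mzs_of_dichotomy (Multiset.cons_ne_zero) (by simp [add_assoc, hsum]) fun V hV h0 => ?_
  by_cases hm : a + b ∈ V
  · obtain ⟨V', rfl⟩ := Multiset.exists_cons_of_mem hm
    rw [Multiset.cons_le_cons_iff] at hV
    rw [Multiset.sum_cons] at h0
    have hle : a ::ₘ b ::ₘ V' ≤ a ::ₘ b ::ₘ R := by simpa using hV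
    rcases mzs_dichotomy hS hle (by simpa [add_assoc] using h0) with h1 | h1
    · simp at h1
    · right
      simp at h1
      rw [h1]
  · rw [Multiset.le_cons_of_notMem hm] at hV
    have hle : V ≤ a ::ₘ b ::ₘ R :=
      hV.trans ((Multiset.le_cons_self _ _).trans (Multiset.le_cons_self _ _))
    rcases mzs_dichotomy hS hle h0 with h1 | h1
    · exact Or.inl h1
    · exfalso
      have := Multiset.card_le_card hV
      rw [h1] at this
      simp at this

theorem mzs_map_subtype {G : Type*} [AddCommGroup G] {H : AddSubgroup G} {S : Multiset H}
    (hS : IsMinimalZeroSum S) : IsMinimalZeroSum (S.map H.subtype) := by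
  have hinj : Function.Injective H.subtype := H.subtype_injective
  refine mzs_of_dichotomy ?_ ?_ fun V hV h0 => ?_
  · simpa using hS.1
  · rw [← map_multiset_sum, hS.2.1, _root_.map_zero]
  · have hmem : ∀ x ∈ V, x ∈ H := by
      intro x hx
      obtain ⟨y, _, rfl⟩ := Multiset.mem_map.mp (Multiset.mem_of_le hV hx)
      exact y.2
    obtain ⟨V', rfl⟩ : ∃ V' : Multiset H, V'.map H.subtype = V := by
      refine ⟨V.attach.map fun x => ⟨x.1, hmem x.1 x.2⟩, ?_⟩
      rw [Multiset.map_map]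
      exact Multiset.attach_map_val V
    rw [Multiset.map_le_map_iff hinj] at hV
    rw [← map_multiset_sum] at h0
    have h0' : V'.sum = 0 := hinj (by rw [h0, _root_.map_zero])
    rcases mzs_dichotomy hS hV h0' with h1 | h1
    · left; simp [h1]
    · right; rw [h1]

theorem cmul_one_add_card {G : Type*} [AddCommMonoid G] [DecidableEq G] (S : Multiset G) :
    cmul 1 S + S.toFinset.card = Multiset.card S := by
  have h : cmul 1 S = ∑ g ∈ S.toFinset, (S.count g - 1) := by
    unfold cmul
    congr!
  rw [h, ← Multiset.toFinset_sum_count_eq S, Finset.card_eq_sum_ones, ← Finset.sum_add_distrib]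
  refine Finset.sum_congr rfl fun g hg => ?_
  have : 1 ≤ S.count g := Multiset.one_le_count_iff_mem.mpr (Multiset.mem_toFinset.mp hg)
  omega

theorem cmul_le_zero_iff {G : Type*} [AddCommMonoid G] (S : Multiset G) :
    cmul 1 S ≤ 0 ↔ S.Nodup := by
  classical
  rw [← Multiset.toFinset_card_eq_card_iff_nodup]
  have := cmul_one_add_card S
  omega

theorem exists_cons_of_cmul_le_one {G : Type*} [AddCommMonoid G] {S : Multiset G}
    (hne : S ≠ 0) (hc : cmul 1 S ≤ 1) : ∃ h U, S = h ::ₘ U ∧ U.Nodup := by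
  classical
  by_cases hnd : S.Nodup
  · obtain ⟨h, hh⟩ := Multiset.exists_mem_of_ne_zero hne
    obtain ⟨U, rfl⟩ := Multiset.exists_cons_of_mem hh
    exact ⟨h, U, rfl, (Multiset.nodup_cons.mp hnd).2⟩
  · rw [Multiset.nodup_iff_count_le_one] at hnd
    push Not at hnd
    obtain ⟨h, hh⟩ := hnd
    obtain ⟨U, rfl⟩ := Multiset.exists_cons_of_mem
      (Multiset.count_pos.mp (by omega : 0 < S.count h))
    refine ⟨h, U, rfl, ?_⟩
    rw [Multiset.count_cons_self] at hh
    have hU : h ∈ U := Multiset.count_pos.mp (by omega)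
    have hcard := cmul_one_add_card (h ::ₘ U)
    rw [Multiset.toFinset_cons, Finset.insert_eq_of_mem (Multiset.mem_toFinset.mpr hU),
      Multiset.card_cons] at hcard
    rw [← Multiset.toFinset_card_eq_card_iff_nodup]
    have := Multiset.toFinset_card_le U
    omega

theorem sd_bddAbove (G : Type*) [AddCommMonoid G] [Finite G] (k : ℕ) :
    BddAbove {m | ∃ S : Multiset G, IsMinimalZeroSum S ∧ cmul 1 S ≤ k ∧ Multiset.card S = m} := by
  classical
  have := Fintype.ofFinite G
  refine ⟨k + Fintype.card G, ?_⟩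
  rintro m ⟨S, -, hc, rfl⟩
  have := cmul_one_add_card S
  have := Finset.card_le_univ S.toFinset
  omega

theorem le_SD {G : Type*} [AddCommMonoid G] [Finite G] {S : Multiset G}
    (hS : IsMinimalZeroSum S) (hnd : S.Nodup) : Multiset.card S ≤ SD G :=
  le_csSup (sd_bddAbove G 0) ⟨S, hS, (cmul_le_zero_iff S).mpr hnd, rfl⟩

theorem SDk_attained (G : Type*) [AddCommMonoid G] [Finite G] (k : ℕ) :
    ∃ S : Multiset G, IsMinimalZeroSum S ∧ cmul 1 S ≤ k ∧ Multiset.card S = SDk G k := by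
  refine Nat.sSup_mem (s := {m | ∃ S : Multiset G, IsMinimalZeroSum S ∧ cmul 1 S ≤ k ∧
    Multiset.card S = m}) ⟨1, {0}, mzs_singleton_zero G, ?_, by simp⟩ (sd_bddAbove G k)
  exact ((cmul_le_zero_iff _).mpr (Multiset.nodup_singleton 0)).trans (Nat.zero_le k)

theorem SD_le_Ol (G : Type*) [AddCommMonoid G] [Finite G] : SD G ≤ Ol G := by
  obtain ⟨S, hS, hc, hcard⟩ := SDk_attained G 0
  unfold SD
  rw [← hcard]
  exact le_csSup (sd_bddAbove G 1) ⟨S, hS, hc.trans zero_le_one, rfl⟩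

/-- The case of a trivial contribution of the quotient: a minimal zero-sum sequence that
is squarefree up to one term can be made squarefree at the cost of one term. -/
theorem card_le_SD_of_cons {G : Type*} [AddCommGroup G] [Finite G] {h : G} {U : Multiset G}
    (hS : IsMinimalZeroSum (h ::ₘ U)) (hU : U.Nodup) : Multiset.card U ≤ SD G := by
  by_cases hm : h ∈ U
  swap
  · have := le_SD hS (Multiset.nodup_cons.mpr ⟨hm, hU⟩)
    rw [Multiset.card_cons] at this
    omega
  obtain ⟨R, rfl⟩ := Multiset.exists_cons_of_mem hm
  obtain ⟨hR, hRn⟩ := Multiset.nodup_cons.mp hU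
  have h0 : (0 : G) ∉ R := fun hz => mzs_zero_notMem hS (by simp) (by simp [hz])
  by_cases h2 : h + h ∈ R
  swap
  · have := le_SD (mzs_merge hS) (Multiset.nodup_cons.mpr ⟨h2, hRn⟩)
    simpa using this
  obtain ⟨x, hx, hxR⟩ : ∃ x ∈ R, x + h ∉ R := by
    by_contra hcon
    push Not at hcon
    have hall : ∀ k : ℕ, (k + 2) • h ∈ R := by
      intro k
      induction k with
      | zero => simpa [two_nsmul] using h2
      | succ k ih =>
        have := hcon _ ih
        rwa [← succ_nsmul] at this
    have hpos := addOrderOf_pos h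
    have := hall (2 * addOrderOf h - 2)
    rw [Nat.sub_add_cancel (by omega), mul_nsmul', addOrderOf_nsmul_eq_zero, nsmul_zero] at this
    exact h0 this
  obtain ⟨R', rfl⟩ := Multiset.exists_cons_of_mem hx
  have hS' : IsMinimalZeroSum (x ::ₘ h ::ₘ (h ::ₘ R')) := by
    have e : x ::ₘ h ::ₘ (h ::ₘ R') = h ::ₘ h ::ₘ x ::ₘ R' := by
      rw [Multiset.cons_swap x h, Multiset.cons_swap x h]
    rwa [e]
  have hnd : ((x + h) ::ₘ h ::ₘ R').Nodup := by
    rw [Multiset.nodup_cons, Multiset.nodup_cons]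
    simp only [Multiset.mem_cons, not_or] at hxR hR h0 ⊢
    refine ⟨⟨fun he => h0.1 ?_, hxR.2⟩, hR.2, (Multiset.nodup_cons.mp hRn).2⟩
    exact (add_eq_right.mp he).symm
  have := le_SD (mzs_merge hS') hnd
  simpa using this

theorem exists_lift {G : Type*} [AddCommGroup G] {H : AddSubgroup G} {S : Multiset (G ⧸ H)}
    (hne : S ≠ 0) (hs : S.sum = 0) {h : G} (hh : h ∈ H) :
    ∃ W : Multiset G, W.map (QuotientAddGroup.mk' H) = S ∧ W.sum = h := by
  obtain ⟨a, ha⟩ := Multiset.exists_mem_of_ne_zero hne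
  obtain ⟨S', rfl⟩ := Multiset.exists_cons_of_mem ha
  set Z : Multiset G := S'.map Quotient.out with hZ
  have hZm : Z.map (QuotientAddGroup.mk' H) = S' := by
    rw [hZ, Multiset.map_map]
    conv_rhs => rw [← Multiset.map_id S']
    refine Multiset.map_congr rfl fun x _ => ?_
    exact QuotientAddGroup.out_eq' x
  refine ⟨(h - Z.sum) ::ₘ Z, ?_, by simp⟩
  rw [Multiset.map_cons, hZm]
  congr 1
  rw [map_sub, map_multiset_sum, hZm]
  rw [Multiset.sum_cons] at hs
  have : QuotientAddGroup.mk' H h = 0 := (QuotientAddGroup.eq_zero_iff h).mpr hh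
  rw [this, zero_sub]
  exact (eq_neg_of_add_eq_zero_left hs).symm

theorem mzs_combine {G : Type*} [AddCommGroup G] {H : AddSubgroup G} {W U : Multiset G} {h : G}
    (hW : IsMinimalZeroSum (W.map (QuotientAddGroup.mk' H))) (hWs : W.sum = h)
    (hU : IsMinimalZeroSum (h ::ₘ U)) (hUH : ∀ x ∈ U, x ∈ H) : IsMinimalZeroSum (W + U) := by
  classical
  have hW0 : W ≠ 0 := fun he => hW.1 (by simp [he])
  have hUs := hU.2.1
  rw [Multiset.sum_cons] at hUs
  refine mzs_of_dichotomy ?_ (by rw [Multiset.sum_add, hWs, hUs]) fun V hV h0 => ?_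
  · intro he
    exact hW0 (add_eq_zero.mp he).1
  obtain ⟨V1, V2, rfl, hV1, hV2⟩ : ∃ V1 V2, V = V1 + V2 ∧ V1 ≤ W ∧ V2 ≤ U := by
    refine ⟨V ∩ W, V - W, ?_, Multiset.inter_le_right, ?_⟩
    · ext x
      simp only [Multiset.count_add, Multiset.count_inter, Multiset.count_sub]
      omega
    · exact tsub_le_iff_left.mpr hV
  rw [Multiset.sum_add] at h0
  have hV2H : V2.sum ∈ H :=
    AddSubgroup.multiset_sum_mem H V2 fun x hx => hUH x (Multiset.mem_of_le hV2 hx)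
  have hq : (V1.map (QuotientAddGroup.mk' H)).sum = 0 := by
    rw [← map_multiset_sum, eq_neg_of_add_eq_zero_left h0, map_neg, neg_eq_zero]
    exact (QuotientAddGroup.eq_zero_iff _).mpr hV2H
  rcases mzs_dichotomy hW (Multiset.map_le_map hV1) hq with h1 | h1
  · rw [Multiset.map_eq_zero] at h1
    subst h1
    rw [Multiset.sum_zero, zero_add] at h0
    rcases mzs_dichotomy hU (hV2.trans (Multiset.le_cons_self _ _)) h0 with h2 | h2
    · left; simp [h2]
    · exfalso
      have := Multiset.card_le_card hV2
      rw [h2] at this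
      simp at this
  · have hVW : V1 = W := by
      refine Multiset.eq_of_le_of_card_le hV1 ?_
      have := congrArg Multiset.card h1
      rw [Multiset.card_map, Multiset.card_map] at this
      omega
    subst hVW
    rw [hWs] at h0
    rcases mzs_dichotomy hU (Multiset.cons_le_cons h hV2) (by simpa using h0) with h2 | h2
    · simp at h2
    · right
      rw [Multiset.cons_inj_right] at h2
      rw [h2]

/-- For a finite abelian group `G` and a subgroup `H`:
`SD(G) ≥ SD(G/H) + Ol(H) − 2`, and consequently `SD(G) ≥ SD(G/H) + SD(H) − 2`. -/
theorem strong_davenport_ge_quotient_add_subgroup (G : Type*) [AddCommGroup G] [Fintype G]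
    (H : AddSubgroup G) :
    SD (G ⧸ H) + Ol H ≤ SD G + 2 ∧ SD (G ⧸ H) + SD H ≤ SD G + 2 := by
  have key : SD (G ⧸ H) + Ol H ≤ SD G + 2 := by
    obtain ⟨S, hS, hSc, hScard⟩ := SDk_attained (G ⧸ H) 0
    obtain ⟨T, hT, hTc, hTcard⟩ := SDk_attained H 1
    rw [cmul_le_zero_iff] at hSc
    unfold Ol
    unfold SD at *
    rw [← hScard, ← hTcard]
    change _ ≤ SD G + 2
    obtain ⟨h, U, rfl, hU⟩ := exists_cons_of_cmul_le_one hT.1 hTc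
    have hT' := mzs_map_subtype hT
    rw [Multiset.map_cons] at hT'
    have hUn : (U.map H.subtype).Nodup := hU.map H.subtype_injective
    rw [Multiset.card_cons]
    by_cases h2 : 2 ≤ Multiset.card S
    · have hz := mzs_zero_notMem hS h2
      obtain ⟨W, rfl, hWs⟩ := exists_lift hS.1 hS.2.1 (SetLike.coe_mem h)
      have hUH : ∀ x ∈ U.map H.subtype, x ∈ H := by
        intro x hx
        obtain ⟨y, _, rfl⟩ := Multiset.mem_map.mp hx
        exact y.2
      have hM := mzs_combine hS hWs hT' hUH
      have hnd : (W + U.map H.subtype).Nodup := by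
        refine Multiset.nodup_add.mpr ⟨Multiset.Nodup.of_map _ hSc, hUn, ?_⟩
        rw [Multiset.disjoint_left]
        intro x hxW hxU
        refine hz (Multiset.mem_map.mpr ⟨x, hxW, ?_⟩)
        exact (QuotientAddGroup.eq_zero_iff x).mpr (hUH x hxU)
      have := le_SD hM hnd
      simp only [Multiset.card_add, Multiset.card_map] at this ⊢
      omega
    · have := card_le_SD_of_cons hT' hUn
      rw [Multiset.card_map] at this
      omega
  exact ⟨key, (Nat.add_le_add_left (SD_le_Ol H) _).trans key⟩
end
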